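/- For all integers n > p ≥ 0, Σ_{k=p+1}^{n} Σ_{j=0}^{p} C(n,k) S(k,p+1) c(p,j) (-1)^j B_{n+j−k} = p^{n−1}(n − p·H_p)/(p+1) + (p!/(p+1)) Σ_{j=1}^{p} S(n,p−j) H_j/j!, with the convention 0^0 = 1. -/

import Mathlib

/-- Stirling numbers of the second kind. -/
def stirling2 (n k : ℕ) : ℚ :=
  (1 / (Nat.factorial k : ℚ)) *
    ∑ j ∈ Finset.range (k + 1), (-1 : ℚ) ^ (k - j) * (Nat.choose k j : ℚ) * (j : ℚ) ^ n

/-- Unsigned Stirling numbers of the first kind, defined as the coefficients of the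
ascending factorial `x (x+1) ⋯ (x+p-1)`. -/
noncomputable def stirling1 (p j : ℕ) : ℚ := (ascPochhammer ℚ p).coeff j

/-- Harmonic numbers. -/
def harmonic' (n : ℕ) : ℚ := ∑ j ∈ Finset.Icc 1 n, (1 : ℚ) / (j : ℚ)

/-!
Let `L` be the umbral functional `Xⁿ ↦ Bₙ` and `Δ f = f(X + 1) - f(X)`; the recurrence of the
Bernoulli numbers says `L (Δ f) = f'(0)`. Put `aₘ = (-1)ᵐ (X choose m)`. Since
`∑ₖ C(n,k) S(k,p+1) Xⁿ⁻ᵏ = Δᵖ⁺¹ Xⁿ / (p+1)!` and `∑ⱼ c(p,j) (-X)ʲ = p! aₚ`, the left-hand side is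
`L (aₚ Δᵖ⁺¹ Xⁿ) / (p+1)`. From `Δ aₘ₊₁ = -aₘ` one gets, by telescoping,
`aₚ Δᵖ⁺¹ f = Δ (∑ₘ aₘ (1 + Δ)ᵖ⁻ᵐ Δᵐ f)`. As `aₘ'(0) = -1/m`, applying `L` gives
`f'(p) - ∑ₘ (1/m) ((1 + Δ)ᵖ⁻ᵐ Δᵐ f)(0)`, and the identity
`∑ₘ (1/m) (1 + y)ᵖ⁻ᵐ yᵐ = Hₚ (1 + y)ᵖ - ∑ⱼ C(p,j) Hⱼ yᵖ⁻ʲ` at `y = Δ` turns this into the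
right-hand side.
-/

section

open Finset
open Polynomial hiding bernoulli sum_bernoulli
open scoped Nat fwdDiff

section FwdDiff

variable {R : Type*} [CommRing R]

variable (R) in
/-- The forward difference operator `f(X) ↦ f(X + 1) - f(X)` on polynomials, bundled as an
endomorphism so that identities between operators can be read off from identities in a ring. -/
noncomputable def polyFwdDiff : Module.End R R[X] := taylor 1 - 1

lemma polyFwdDiff_apply (f : R[X]) : polyFwdDiff R f = taylor 1 f - f := rfl

lemma one_add_polyFwdDiff : 1 + polyFwdDiff R = taylor 1 := add_sub_cancel _ _

lemma one_add_polyFwdDiff_pow (i : ℕ) : (1 + polyFwdDiff R) ^ i = taylor (i : R) := by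
  induction i with
  | zero => ext; simp
  | succ i ih =>
    refine LinearMap.ext fun f => ?_
    rw [pow_succ, Module.End.mul_apply, ih, one_add_polyFwdDiff, taylor_taylor, Nat.cast_succ]

lemma polyFwdDiff_mul (f g : R[X]) :
    polyFwdDiff R (f * g) =
      f * polyFwdDiff R g + polyFwdDiff R f * (1 + polyFwdDiff R) g := by
  rw [one_add_polyFwdDiff]
  simp only [polyFwdDiff_apply, taylor_mul]
  ring

lemma eval_polyFwdDiff_pow (m : ℕ) (f : R[X]) (x : R) :
    ((polyFwdDiff R ^ m) f).eval x = Δ_[1] ^[m] (fun y => f.eval y) x := by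
  induction m generalizing f with
  | zero => simp
  | succ m ih =>
    rw [pow_succ, Module.End.mul_apply, ih, Function.iterate_succ_apply]
    have : (fun y => (polyFwdDiff R f).eval y) = Δ_[1] fun y => f.eval y := by
      funext y
      rw [polyFwdDiff_apply, eval_sub, taylor_eval, fwdDiff]
    rw [this]

lemma polyFwdDiff_ascPochhammer_comp_neg_X (m : ℕ) :
    polyFwdDiff R ((ascPochhammer R (m + 1)).comp (-X)) =
      -((m : R) + 1) • (ascPochhammer R m).comp (-X) := by
  have h_left : taylor 1 ((ascPochhammer R (m + 1)).comp (-X)) =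
      (-X - 1) * (ascPochhammer R m).comp (-X) := by
    rw [ascPochhammer_succ_left, taylor_apply]
    simp only [mul_comp, X_comp, comp_assoc, add_comp, one_comp, neg_mul, map_one, neg_comp,
      neg_add, neg_add_cancel_right]
    ring
  have h_right : (ascPochhammer R (m + 1)).comp (-X) =
      (-X + (m : R[X])) * (ascPochhammer R m).comp (-X) := by
    rw [ascPochhammer_succ_right, mul_comp, mul_comm]
    simp
  rw [polyFwdDiff_apply, h_left, h_right, smul_eq_C_mul]
  simp only [C_neg, C_add, C_1, C_eq_natCast]
  ring

end FwdDiff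

section SignedBinomial

variable {K : Type*} [Field K]

variable (K) in
/-- The polynomial `(-X)(-X + 1)⋯(-X + m - 1) / m! = (-1)ᵐ (X choose m)`. -/
noncomputable def signedBinomial (m : ℕ) : K[X] :=
  (m ! : K)⁻¹ • (ascPochhammer K m).comp (-X)

@[simp]
lemma signedBinomial_zero : signedBinomial K 0 = 1 := by simp [signedBinomial]

lemma signedBinomial_coeff_zero (m : ℕ) :
    (signedBinomial K m).coeff 0 = if m = 0 then 1 else 0 := by
  rw [signedBinomial, coeff_smul, coeff_zero_eq_eval_zero, eval_comp]
  rcases m with _ | m <;> simp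

variable [CharZero K]

lemma factorial_smul_signedBinomial (m : ℕ) :
    (m ! : K) • signedBinomial K m = (ascPochhammer K m).comp (-X) :=
  smul_inv_smul₀ (Nat.cast_ne_zero.2 m.factorial_ne_zero) _

-- At `m = 0` this reads `0 = -0⁻¹`, true because `0⁻¹ = 0`; sums over all `m ≤ p` with weights
-- `m⁻¹` therefore have no term at `m = 0`.
lemma signedBinomial_coeff_one (m : ℕ) : (signedBinomial K m).coeff 1 = -(m : K)⁻¹ := by
  rcases m with _ | m
  · simp [coeff_one]
  have h : ((ascPochhammer K (m + 1)).comp (-X)).coeff 1 = -(m ! : K) := by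
    rw [ascPochhammer_succ_left, mul_comp, X_comp, neg_mul, coeff_neg, coeff_X_mul,
      coeff_zero_eq_eval_zero]
    simp [eval_comp, ascPochhammer_eval_one]
  rw [signedBinomial, coeff_smul, h, smul_eq_mul, Nat.factorial_succ, Nat.cast_mul, mul_inv,
    mul_neg, inv_mul_cancel_right₀ (Nat.cast_ne_zero.2 m.factorial_ne_zero)]

lemma polyFwdDiff_signedBinomial_succ (m : ℕ) :
    polyFwdDiff K (signedBinomial K (m + 1)) = -signedBinomial K m := by
  have hm : (m : K) + 1 ≠ 0 := Nat.cast_add_one_ne_zero m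
  rw [signedBinomial, map_smul, polyFwdDiff_ascPochhammer_comp_neg_X, smul_smul, signedBinomial,
    ← neg_smul, Nat.factorial_succ, Nat.cast_mul, Nat.cast_succ]
  congr 1
  field_simp

lemma polyFwdDiff_sum_signedBinomial_mul (p : ℕ) (f : K[X]) :
    polyFwdDiff K (∑ mi ∈ antidiagonal p, signedBinomial K mi.1 *
        ((1 + polyFwdDiff K) ^ mi.2 * polyFwdDiff K ^ mi.1) f) =
      signedBinomial K p * (polyFwdDiff K ^ (p + 1)) f := by
  induction p generalizing f with
  | zero => simp
  | succ p ih =>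
    have shift_eq (m i : ℕ) : ((1 + polyFwdDiff K) ^ (i + 1) * polyFwdDiff K ^ m) f =
        ((1 + polyFwdDiff K) ^ i * polyFwdDiff K ^ m) ((1 + polyFwdDiff K) f) := by
      have : Commute (1 + polyFwdDiff K) (polyFwdDiff K ^ m) :=
        ((Commute.one_left _).add_left (Commute.refl _)).pow_right m
      rw [pow_succ, mul_assoc, this.eq, ← mul_assoc, Module.End.mul_apply]
    have shift_top : (1 + polyFwdDiff K) ((polyFwdDiff K ^ (p + 1)) f) =
        (polyFwdDiff K ^ (p + 1)) ((1 + polyFwdDiff K) f) := by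
      simpa using shift_eq (p + 1) 0
    rw [Nat.sum_antidiagonal_succ']
    simp only [shift_eq]
    rw [map_add, ih, pow_zero, one_mul, polyFwdDiff_mul, polyFwdDiff_signedBinomial_succ,
      shift_top, ← Module.End.mul_apply, ← pow_succ']
    ring

end SignedBinomial

section BernoulliFunctional

/-- The umbral functional `Xⁿ ↦ Bₙ`. -/
noncomputable def bernoulliFunctional : ℚ[X] →ₗ[ℚ] ℚ :=
  lsum fun n => bernoulli n • LinearMap.id

@[simp]
lemma bernoulliFunctional_X_pow (n : ℕ) :
    bernoulliFunctional (X ^ n) = bernoulli n := by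
  simp [bernoulliFunctional, lsum_apply, X_pow_eq_monomial, sum_monomial_index]

lemma bernoulliFunctional_polyFwdDiff (f : ℚ[X]) :
    bernoulliFunctional (polyFwdDiff ℚ f) = f.coeff 1 := by
  induction f using Polynomial.induction_on' with
  | add f g hf hg => rw [map_add, map_add, hf, hg, coeff_add]
  | monomial n a =>
    have hΔ : polyFwdDiff ℚ (X ^ n) = ∑ k ∈ range n, (n.choose k : ℚ) • X ^ k := by
      simp [polyFwdDiff_apply, add_pow, sum_range_succ, smul_eq_C_mul, mul_comm]
    have hmonomial : monomial n a = a • (X : ℚ[X]) ^ n := smul_X_eq_monomial.symm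
    rw [hmonomial, map_smul, map_smul, hΔ, map_sum, coeff_smul, coeff_X_pow]
    simp only [map_smul, bernoulliFunctional_X_pow, smul_eq_mul, sum_bernoulli,
      eq_comm (a := 1)]

lemma bernoulliFunctional_signedBinomial_mul_polyFwdDiff_pow (p : ℕ) (f : ℚ[X]) :
    bernoulliFunctional (signedBinomial ℚ p * (polyFwdDiff ℚ ^ (p + 1)) f) =
      f.derivative.eval (p : ℚ) - ∑ mi ∈ antidiagonal p, (mi.1 : ℚ)⁻¹ *
        (((1 + polyFwdDiff ℚ) ^ mi.2 * polyFwdDiff ℚ ^ mi.1) f).eval 0 := by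
  have coeff_one_term (v : ℚ[X]) (m : ℕ) : (signedBinomial ℚ m * v).coeff 1 =
      (if m = 0 then v.coeff 1 else 0) - (m : ℚ)⁻¹ * v.eval 0 := by
    rw [mul_coeff_one, signedBinomial_coeff_zero, signedBinomial_coeff_one,
      coeff_zero_eq_eval_zero v, ite_mul, one_mul, zero_mul, neg_mul, sub_eq_add_neg]
  rw [← polyFwdDiff_sum_signedBinomial_mul, bernoulliFunctional_polyFwdDiff, finsetSum_coeff]
  simp only [coeff_one_term, sum_sub_distrib]
  congr 1
  rw [Nat.sum_antidiagonal_eq_sum_range_succ_mk, sum_range_succ']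
  simp [one_add_polyFwdDiff_pow, taylor_coeff_one]

end BernoulliFunctional

section Harmonic

variable {A : Type*} [Ring A] [Algebra ℚ A]

lemma sum_choose_mul_inv_succ_smul_pow (p : ℕ) (y : A) :
    ∑ ji ∈ antidiagonal p, ((p.choose ji.1 : ℚ) * ((ji.1 : ℚ) + 1)⁻¹) • y ^ ji.2 =
      ((p : ℚ) + 1)⁻¹ • ((1 + y) ^ (p + 1) - y ^ (p + 1)) := by
  have absorb (j : ℕ) : (p.choose j : ℚ) * ((j : ℚ) + 1)⁻¹ =
      ((p : ℚ) + 1)⁻¹ * (p + 1).choose (j + 1) := by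
    have h : ((p : ℚ) + 1) * p.choose j = (p + 1).choose (j + 1) * ((j : ℚ) + 1) := by
      exact_mod_cast Nat.add_one_mul_choose_eq p j
    field_simp
    linear_combination h
  rw [(Commute.one_left y).add_pow', Nat.sum_antidiagonal_succ]
  simp [absorb, mul_smul, smul_sum, Nat.cast_smul_eq_nsmul]

lemma sum_choose_mul_harmonic_smul_pow_succ (p : ℕ) (y : A) :
    ∑ ji ∈ antidiagonal (p + 1), (((p + 1).choose ji.1 : ℚ) * harmonic ji.1) • y ^ ji.2 =
      (1 + y) * ∑ ji ∈ antidiagonal p, ((p.choose ji.1 : ℚ) * harmonic ji.1) • y ^ ji.2 +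
        ((p : ℚ) + 1)⁻¹ • ((1 + y) ^ (p + 1) - y ^ (p + 1)) := by
  have h_pascal := sum_antidiagonal_choose_succ_nsmul (fun j i => harmonic j • y ^ i) p
  simp only [← Nat.cast_smul_eq_nsmul ℚ, smul_smul] at h_pascal
  have h_succ : ∑ ji ∈ antidiagonal p, ((p.choose ji.2 : ℚ) * harmonic (ji.1 + 1)) • y ^ ji.2 =
      ∑ ji ∈ antidiagonal p, ((p.choose ji.1 : ℚ) * harmonic ji.1) • y ^ ji.2 +
        ((p : ℚ) + 1)⁻¹ • ((1 + y) ^ (p + 1) - y ^ (p + 1)) := by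
    rw [← sum_choose_mul_inv_succ_smul_pow, ← sum_add_distrib]
    refine sum_congr rfl fun ji hji => ?_
    rw [← Nat.choose_symm_of_eq_add (mem_antidiagonal.1 hji).symm, harmonic_succ, Nat.cast_succ,
      mul_add, add_smul]
  rw [h_pascal, h_succ, add_mul, one_mul, mul_sum, add_left_comm, add_assoc]
  simp only [mul_smul_comm, ← pow_succ']

lemma sum_inv_smul_add_sum_choose_mul_harmonic_smul (p : ℕ) (y : A) :
    ∑ mi ∈ antidiagonal p, (mi.1 : ℚ)⁻¹ • ((1 + y) ^ mi.2 * y ^ mi.1) +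
        ∑ ji ∈ antidiagonal p, ((p.choose ji.1 : ℚ) * harmonic ji.1) • y ^ ji.2 =
      harmonic p • (1 + y) ^ p := by
  induction p with
  | zero => simp
  | succ p ih =>
    have h_succ : ∑ mi ∈ antidiagonal (p + 1), (mi.1 : ℚ)⁻¹ • ((1 + y) ^ mi.2 * y ^ mi.1) =
        ((p : ℚ) + 1)⁻¹ • y ^ (p + 1) +
          (1 + y) * ∑ mi ∈ antidiagonal p, (mi.1 : ℚ)⁻¹ • ((1 + y) ^ mi.2 * y ^ mi.1) := by
      rw [Nat.sum_antidiagonal_succ', mul_sum]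
      simp [pow_succ', mul_assoc]
    calc
      _ = (1 + y) * (∑ mi ∈ antidiagonal p, (mi.1 : ℚ)⁻¹ • ((1 + y) ^ mi.2 * y ^ mi.1) +
            ∑ ji ∈ antidiagonal p, ((p.choose ji.1 : ℚ) * harmonic ji.1) • y ^ ji.2) +
          ((p : ℚ) + 1)⁻¹ • (1 + y) ^ (p + 1) := by
        rw [h_succ, sum_choose_mul_harmonic_smul_pow_succ, mul_add, smul_sub]
        abel
      _ = harmonic (p + 1) • (1 + y) ^ (p + 1) := by
        rw [ih, mul_smul_comm, ← pow_succ', ← add_smul, harmonic_succ, Nat.cast_succ]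

lemma harmonic'_eq_harmonic (n : ℕ) : harmonic' n = harmonic n := by
  simp [harmonic', harmonic_eq_sum_Icc]

lemma sum_choose_mul_harmonic_mul_factorial_mul (p : ℕ) (g : ℕ → ℚ) :
    ∑ ji ∈ antidiagonal p, (p.choose ji.1 : ℚ) * harmonic ji.1 * (ji.2 ! * g ji.2) =
      p ! * ∑ j ∈ Icc 1 p, g (p - j) * harmonic j / j ! := by
  rw [Nat.sum_antidiagonal_eq_sum_range_succ_mk, range_eq_Ico, sum_eq_sum_Ico_succ_bot (by simp),
    mul_sum]
  simp only [harmonic_zero, mul_zero, zero_mul, zero_add]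
  refine sum_congr rfl fun j hj => ?_
  have hj' : j ≤ p := (mem_Icc.1 hj).2
  rw [← Nat.choose_mul_factorial_mul_factorial hj']
  push_cast
  field_simp

end Harmonic

section Stirling

lemma fwdDiff_iter_pow_apply_zero (m n : ℕ) :
    Δ_[1] ^[m] (fun x : ℚ => x ^ n) 0 = m ! * stirling2 n m := by
  rw [fwdDiff_iter_eq_sum_shift, stirling2, ← mul_assoc, mul_one_div_cancel (by positivity),
    one_mul]
  simp

lemma stirling2_eq_zero_of_lt {n m : ℕ} (h : n < m) : stirling2 n m = 0 := by
  have hΔ := fwdDiff_iter_pow_apply_zero m n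
  rw [fwdDiff_iter_pow_eq_zero_of_lt h] at hΔ
  exact (mul_eq_zero.1 hΔ.symm).resolve_left (by positivity)

lemma eval_zero_polyFwdDiff_pow_X_pow (m n : ℕ) :
    ((polyFwdDiff ℚ ^ m) (X ^ n)).eval 0 = m ! * stirling2 n m := by
  simp [eval_polyFwdDiff_pow, fwdDiff_iter_pow_apply_zero]

lemma polyFwdDiff_pow_X_pow (m n : ℕ) :
    (polyFwdDiff ℚ ^ m) (X ^ n) =
      (m ! : ℚ) • ∑ k ∈ Icc m n, ((n.choose k : ℚ) * stirling2 k m) • X ^ (n - k) := by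
  refine Polynomial.funext fun x => ?_
  have h_binomial : (fun y : ℚ => (y + x) ^ n) =
      ∑ k ∈ range (n + 1), ((n.choose k : ℚ) * x ^ (n - k)) • fun y : ℚ => y ^ k := by
    funext y
    rw [add_pow, Finset.sum_apply]
    exact sum_congr rfl fun k _ => by simp only [Pi.smul_apply, smul_eq_mul]; ring
  have h_range : ∑ k ∈ Icc m n, ((n.choose k : ℚ) * stirling2 k m) • (X : ℚ[X]) ^ (n - k) =
      ∑ k ∈ range (n + 1), ((n.choose k : ℚ) * stirling2 k m) • X ^ (n - k) := by
    refine sum_subset (fun k => by simp) fun k hk hk' => ?_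
    have hkm : k < m := by
      simp only [mem_range, mem_Icc] at hk hk'
      omega
    rw [stirling2_eq_zero_of_lt hkm, mul_zero, zero_smul]
  rw [h_range, eval_polyFwdDiff_pow, ← zero_add x, ← fwdDiff_iter_comp_add]
  simp only [eval_pow, eval_X, eval_smul, eval_finsetSum, h_binomial, fwdDiff_iter_finsetSum,
    fwdDiff_iter_const_smul, Finset.sum_apply, Pi.smul_apply, fwdDiff_iter_pow_apply_zero,
    smul_eq_mul, mul_sum, zero_add]
  exact sum_congr rfl fun k _ => by ring

lemma sum_stirling1_smul_X_pow (p : ℕ) :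
    ∑ j ∈ range (p + 1), (stirling1 p j * (-1) ^ j) • X ^ j = (p ! : ℚ) • signedBinomial ℚ p := by
  have hdeg : (ascPochhammer ℚ p).natDegree < p + 1 := by simp
  rw [factorial_smul_signedBinomial, comp, eval₂_eq_sum_range' C hdeg]
  refine sum_congr rfl fun j _ => ?_
  rw [stirling1, neg_pow (X : ℚ[X]) j, smul_eq_C_mul, C_mul, mul_assoc, C_pow, C_neg, C_1]

end Stirling

lemma bernoulliFunctional_signedBinomial_mul_eq_sum_harmonic (p : ℕ) (f : ℚ[X]) :
    bernoulliFunctional (signedBinomial ℚ p * (polyFwdDiff ℚ ^ (p + 1)) f) =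
      f.derivative.eval (p : ℚ) - harmonic p * f.eval (p : ℚ) +
        ∑ ji ∈ antidiagonal p,
          (p.choose ji.1 : ℚ) * harmonic ji.1 * ((polyFwdDiff ℚ ^ ji.2) f).eval 0 := by
  have h := congrArg (fun P : Module.End ℚ ℚ[X] => (P f).eval 0)
    (sum_inv_smul_add_sum_choose_mul_harmonic_smul p (polyFwdDiff ℚ))
  simp only [LinearMap.add_apply, LinearMap.sum_apply, LinearMap.smul_apply, eval_add,
    eval_finsetSum, eval_smul, smul_eq_mul, one_add_polyFwdDiff_pow p, taylor_eval, zero_add] at h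
  rw [bernoulliFunctional_signedBinomial_mul_polyFwdDiff_pow]
  linear_combination -h

lemma sum_stirling_bernoulli_eq_bernoulliFunctional (n p : ℕ) :
    ∑ k ∈ Icc (p + 1) n, ∑ j ∈ range (p + 1),
        (n.choose k : ℚ) * stirling2 k (p + 1) * stirling1 p j * (-1) ^ j *
          bernoulli (n + j - k) =
      ((p : ℚ) + 1)⁻¹ *
        bernoulliFunctional (signedBinomial ℚ p * (polyFwdDiff ℚ ^ (p + 1)) (X ^ n)) := by
  have hfact : ((p + 1)! : ℚ) ≠ 0 := by positivity
  calc
    _ = bernoulliFunctional ((∑ j ∈ range (p + 1), (stirling1 p j * (-1) ^ j) • X ^ j) *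
          ∑ k ∈ Icc (p + 1) n, ((n.choose k : ℚ) * stirling2 k (p + 1)) • X ^ (n - k)) := by
      rw [sum_mul_sum, sum_comm, map_sum]
      refine sum_congr rfl fun j _ => ?_
      rw [map_sum]
      refine sum_congr rfl fun k hk => ?_
      have hexp : n + j - k = j + (n - k) := by
        rw [add_comm, Nat.add_sub_assoc (mem_Icc.1 hk).2]
      rw [smul_mul_smul_comm, ← pow_add, map_smul, bernoulliFunctional_X_pow, hexp, smul_eq_mul]
      ring
    _ = bernoulliFunctional (((p ! : ℚ) • signedBinomial ℚ p) *
          ((p + 1)! : ℚ)⁻¹ • (polyFwdDiff ℚ ^ (p + 1)) (X ^ n)) := by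
      rw [sum_stirling1_smul_X_pow, polyFwdDiff_pow_X_pow, inv_smul_smul₀ hfact]
    _ = _ := by
      rw [smul_mul_smul_comm, map_smul, smul_eq_mul, Nat.factorial_succ]
      push_cast
      field_simp

theorem sum_stirling_bernoulli_general (n p : ℕ) :
    ∑ k ∈ Icc (p + 1) n, ∑ j ∈ range (p + 1),
        (n.choose k : ℚ) * stirling2 k (p + 1) * stirling1 p j * (-1) ^ j *
          bernoulli (n + j - k) =
      ((n : ℚ) * (p : ℚ) ^ (n - 1) - (p : ℚ) ^ n * harmonic' p) / ((p : ℚ) + 1) +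
        ((p ! : ℚ) / ((p : ℚ) + 1)) *
          ∑ j ∈ Icc 1 p, stirling2 n (p - j) * harmonic' j / (j ! : ℚ) := by
  rw [sum_stirling_bernoulli_eq_bernoulliFunctional,
    bernoulliFunctional_signedBinomial_mul_eq_sum_harmonic]
  simp only [eval_zero_polyFwdDiff_pow_X_pow]
  rw [sum_choose_mul_harmonic_mul_factorial_mul p (stirling2 n)]
  simp only [harmonic'_eq_harmonic, derivative_X_pow, eval_mul, eval_pow, eval_X, eval_C]
  ring

end

theorem sum_stirling_bernoulli (n p : ℕ) (h : p < n) :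
    ∑ k ∈ Finset.Icc (p + 1) n, ∑ j ∈ Finset.range (p + 1),
        (Nat.choose n k : ℚ) * stirling2 k (p + 1) * stirling1 p j * (-1 : ℚ) ^ j *
          bernoulli (n + j - k) =
      (p : ℚ) ^ (n - 1) * ((n : ℚ) - (p : ℚ) * harmonic' p) / ((p : ℚ) + 1) +
        ((Nat.factorial p : ℚ) / ((p : ℚ) + 1)) *
          ∑ j ∈ Finset.Icc 1 p, stirling2 n (p - j) * harmonic' j / (Nat.factorial j : ℚ) := by
  rw [sum_stirling_bernoulli_general, ← mul_pow_sub_one (Nat.ne_zero_of_lt h) (p : ℚ)]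
  ring
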